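/- Let 1 < p, q < ∞, let x be an ℓ^p-unit vector and y an ℓ^q-unit vector, and for s ∈ ℝ set T_s = x^{p−1}⊗y + s·x^o⊗(y^o)^{q−1}. Then s⁺ = sup{ s ∈ ℝ : ‖T_s‖ ≤ 1 } and s⁻ = inf{ s ∈ ℝ : ‖T_s‖ ≤ 1 } are finite, ‖T_{s⁺}‖ = ‖T_{s⁻}‖ = 1, and T_{s⁺} and T_{s⁻} are extreme points of the closed unit ball of L(ℓ^p_2, ℓ^q_2). -/

import Mathlib

/-! The two endpoint operators are extreme because the contractions sending `x` to `y` form a face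
of the unit ball, and this face is the segment `{T_s | s ∈ S}`.

It is a face because the `ℓ^q` ball is strictly convex (`eq_of_convexComb`): if a proper convex
combination of two contractions sends `x` to the unit vector `y`, both contractions do. It is
contained in the line `s ↦ T_s` because both norms are smooth: if `A` is a contraction with `A x = y`,
then `t ↦ ‖x + t h‖_p - ‖A (x + t h)‖_q` has a minimum at `t = 0`, and the vanishing of its
derivative says `y^{q-1} · A h = x^{p-1} · h` (`dual_eq`). Together with `A x = y` this leaves one
free parameter, namely `s = y^o · A (x^{p-1})^o` (`matrix_eq`).

The same formula for `s` bounds `S`; `S` is closed as an intersection of closed conditions, and it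
contains `0` by Young's inequality. So the supremum and infimum of `S` are attained, and a maximum
or a minimum of `S` is not a proper convex combination of other elements of `S`. -/

noncomputable section

/-- The ℓ^r norm on ℝ². -/
def pnorm (r : ℝ) (z : ℝ × ℝ) : ℝ := (|z.1| ^ r + |z.2| ^ r) ^ (1 / r)

/-- Apply a 2×2 real matrix, viewed as a linear operator ℝ² → ℝ², to a vector. -/
def app (A : Matrix (Fin 2) (Fin 2) ℝ) (z : ℝ × ℝ) : ℝ × ℝ :=
  (A 0 0 * z.1 + A 0 1 * z.2, A 1 0 * z.1 + A 1 1 * z.2)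

/-- Operator norm from ℓ^p_2 to ℓ^q_2. -/
def opNorm (p q : ℝ) (A : Matrix (Fin 2) (Fin 2) ℝ) : ℝ :=
  sSup {c : ℝ | ∃ z : ℝ × ℝ, pnorm p z = 1 ∧ c = pnorm q (app A z)}

/-- Closed unit ball of L(ℓ^p_2, ℓ^q_2). -/
def unitBall (p q : ℝ) : Set (Matrix (Fin 2) (Fin 2) ℝ) := {A | opNorm p q A ≤ 1}

/-- The rank-one operator u ⊗ v : z ↦ (u·z)·v. -/
def tensor (u v : ℝ × ℝ) : Matrix (Fin 2) (Fin 2) ℝ :=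
  !![v.1 * u.1, v.1 * u.2; v.2 * u.1, v.2 * u.2]

/-- Signed power of a vector: (sgn z1 |z1|^r, sgn z2 |z2|^r). -/
def spow (z : ℝ × ℝ) (r : ℝ) : ℝ × ℝ :=
  (Real.sign z.1 * |z.1| ^ r, Real.sign z.2 * |z.2| ^ r)

/-- Rotation: z^o = (−z2, z1). -/
def rot (z : ℝ × ℝ) : ℝ × ℝ := (-z.2, z.1)

/-! ### The `ℓ^r` norm on the plane -/

lemma pnorm_nonneg (r : ℝ) (z : ℝ × ℝ) : 0 ≤ pnorm r z := by
  unfold pnorm; positivity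

lemma pnorm_rpow {r : ℝ} (hr : 1 < r) (z : ℝ × ℝ) :
    pnorm r z ^ r = |z.1| ^ r + |z.2| ^ r := by
  unfold pnorm
  rw [← Real.rpow_mul (by positivity), one_div_mul_cancel (by linarith), Real.rpow_one]

lemma pnorm_le_iff {r : ℝ} (hr : 1 < r) (z : ℝ × ℝ) :
    pnorm r z ≤ 1 ↔ |z.1| ^ r + |z.2| ^ r ≤ 1 := by
  rw [← pnorm_rpow hr]
  have h := Real.rpow_le_rpow_iff (pnorm_nonneg r z) zero_le_one (show (0:ℝ) < r by linarith)
  rw [Real.one_rpow] at h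
  exact h.symm

lemma sum_eq_one {r : ℝ} (hr : 1 < r) {z : ℝ × ℝ} (h : pnorm r z = 1) :
    |z.1| ^ r + |z.2| ^ r = 1 := by
  rw [← pnorm_rpow hr, h, Real.one_rpow]

lemma pnorm_smul {r : ℝ} (hr : 1 < r) (c : ℝ) (z : ℝ × ℝ) :
    pnorm r (c * z.1, c * z.2) = |c| * pnorm r z := by
  unfold pnorm
  simp only [abs_mul]
  rw [Real.mul_rpow (abs_nonneg _) (abs_nonneg _), Real.mul_rpow (abs_nonneg _) (abs_nonneg _),
    ← mul_add, Real.mul_rpow (by positivity) (by positivity), ← Real.rpow_mul (abs_nonneg _),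
    mul_one_div_cancel (by linarith), Real.rpow_one]

lemma abs_fst_le {r : ℝ} (hr : 1 < r) (z : ℝ × ℝ) : |z.1| ≤ pnorm r z := by
  rw [← Real.rpow_le_rpow_iff (abs_nonneg _) (pnorm_nonneg r z) (show (0:ℝ) < r by linarith),
    pnorm_rpow hr]
  have : 0 ≤ |z.2| ^ r := by positivity
  linarith

lemma abs_snd_le {r : ℝ} (hr : 1 < r) (z : ℝ × ℝ) : |z.2| ≤ pnorm r z := by
  rw [← Real.rpow_le_rpow_iff (abs_nonneg _) (pnorm_nonneg r z) (show (0:ℝ) < r by linarith),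
    pnorm_rpow hr]
  have : 0 ≤ |z.1| ^ r := by positivity
  linarith

lemma sign_mul_rpow_mul (a : ℝ) {r : ℝ} (hr : 1 < r) :
    Real.sign a * |a| ^ (r - 1) * a = |a| ^ r := by
  rcases eq_or_ne a 0 with rfl | h
  · simp [Real.zero_rpow (show r ≠ 0 by linarith)]
  · have h1 : Real.sign a * a = |a| := by
      rcases lt_or_gt_of_ne h with h | h
      · rw [Real.sign_of_neg h, abs_of_neg h]; ring
      · rw [Real.sign_of_pos h, abs_of_pos h]; ring
    rw [mul_right_comm, h1, mul_comm, ← Real.rpow_add_one (abs_pos.2 h).ne']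
    congr 1; ring

lemma deriv_coeff (a r : ℝ) :
    |a| ^ (r - 2) * a = Real.sign a * |a| ^ (r - 1) := by
  rcases eq_or_ne a 0 with rfl | h
  · simp
  · have h1 : a = Real.sign a * |a| := by
      rcases lt_or_gt_of_ne h with h | h
      · rw [Real.sign_of_neg h, abs_of_neg h]; ring
      · rw [Real.sign_of_pos h, abs_of_pos h]; ring
    rw [show r - 1 = (r - 2) + 1 by ring, Real.rpow_add_one (abs_pos.2 h).ne']
    linear_combination |a| ^ (r - 2) * h1

lemma spow_dot {r : ℝ} (hr : 1 < r) {z : ℝ × ℝ} (h : pnorm r z = 1) :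
    (spow z (r - 1)).1 * z.1 + (spow z (r - 1)).2 * z.2 = 1 := by
  simp only [spow, sign_mul_rpow_mul _ hr, sum_eq_one hr h]

lemma spow_rot (y : ℝ × ℝ) (r : ℝ) : spow (rot y) r = rot (spow y r) := by
  simp [spow, rot, Real.sign_neg]

/-- The norming functional of a unit vector `x` has norm at most one. -/
lemma abs_spow_dot_le {p : ℝ} (hp : 1 < p) {x z : ℝ × ℝ} (hx : pnorm p x = 1)
    (hz : pnorm p z = 1) :
    |(spow x (p - 1)).1 * z.1 + (spow x (p - 1)).2 * z.2| ≤ 1 := by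
  have hc : (p / (p - 1)).HolderConjugate p := (Real.HolderConjugate.conjExponent hp).symm
  have key : ∀ a b : ℝ, |Real.sign a * |a| ^ (p - 1) * b| ≤
      |a| ^ p / (p / (p - 1)) + |b| ^ p / p := by
    intro a b
    have h := Real.young_inequality_of_nonneg (a := |a| ^ (p - 1)) (b := |b|) (by positivity)
      (abs_nonneg b) hc
    rw [← Real.rpow_mul (abs_nonneg _), mul_div_cancel₀ _ (show p - 1 ≠ 0 by linarith)] at h
    refine le_trans ?_ h
    rw [abs_mul, abs_mul, abs_of_nonneg (show 0 ≤ |a| ^ (p - 1) by positivity)]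
    have hs : |Real.sign a| ≤ 1 := by
      rcases Real.sign_apply_eq a with h | h | h <;> simp [h]
    have : 0 ≤ |a| ^ (p - 1) * |b| := by positivity
    nlinarith
  have h1 := key x.1 z.1
  have h2 := key x.2 z.2
  have e1 := sum_eq_one hp hx
  have e2 := sum_eq_one hp hz
  have hs := hc.inv_add_inv_eq_one
  calc _ ≤ _ := abs_add_le _ _
    _ ≤ _ := add_le_add h1 h2
    _ = (|x.1| ^ p + |x.2| ^ p) * (p / (p - 1))⁻¹ + (|z.1| ^ p + |z.2| ^ p) * p⁻¹ := by
      simp only [div_eq_mul_inv]; ring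
    _ = 1 := by rw [e1, e2, one_mul, one_mul, hs]
    _ ≤ 1 := le_rfl

/-! ### Strict convexity -/

lemma abs_rpow_convex {q : ℝ} (hq : 1 < q) {α β : ℝ} (hα : 0 < α) (hβ : 0 < β) (hab : α + β = 1)
    (a b : ℝ) : |α * a + β * b| ^ q ≤ α * |a| ^ q + β * |b| ^ q ∧
      (|α * a + β * b| ^ q = α * |a| ^ q + β * |b| ^ q → a = b) := by
  have hq0 : 0 < q := by linarith
  have tri : |α * a + β * b| ≤ α * |a| + β * |b| := by
    have := abs_add_le (α * a) (β * b)
    rwa [abs_mul, abs_mul, abs_of_pos hα, abs_of_pos hβ] at this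
  have h1 := Real.rpow_le_rpow (abs_nonneg _) tri hq0.le
  have h2 := (strictConvexOn_rpow hq).convexOn.2 (Set.mem_Ici.2 (abs_nonneg a))
    (Set.mem_Ici.2 (abs_nonneg b)) hα.le hβ.le hab
  simp only [smul_eq_mul] at h2
  refine ⟨h1.trans h2, fun he => ?_⟩
  have hne : |a| = |b| := by
    by_contra hne
    have h3 := (strictConvexOn_rpow hq).2 (Set.mem_Ici.2 (abs_nonneg a))
      (Set.mem_Ici.2 (abs_nonneg b)) hne hα hβ hab
    simp only [smul_eq_mul] at h3
    linarith
  rw [← hne, ← add_mul, hab, one_mul] at he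
  have h4 : |α * a + β * b| = |a| :=
    (Real.rpow_left_inj (abs_nonneg _) (abs_nonneg _) hq0.ne').1 he
  rcases abs_eq_abs.1 hne with h | h
  · exact h
  · -- Here `a = -b`, so `|α * a + β * b| = |α - β| * |b|`, which is less than `|b|` unless `b = 0`.
    have h5 : |(β - α) * b| = |b| := by rw [← abs_neg b, ← h, ← h4, h]; congr 1; ring
    rw [abs_mul] at h5
    have h6 : |β - α| < 1 := abs_lt.2 ⟨by linarith, by linarith⟩
    have h7 : |b| = 0 := by nlinarith [abs_nonneg b]
    rw [abs_eq_zero] at h7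
    rw [h, h7, neg_zero]

/-- The unit ball of `ℓ^q_2` is strictly convex. -/
lemma eq_of_convexComb {q : ℝ} (hq : 1 < q) {α β : ℝ} (hα : 0 < α) (hβ : 0 < β)
    (hab : α + β = 1) {u v y : ℝ × ℝ} (hu : pnorm q u ≤ 1) (hv : pnorm q v ≤ 1)
    (hy : pnorm q y = 1) (h1 : α * u.1 + β * v.1 = y.1) (h2 : α * u.2 + β * v.2 = y.2) :
    u = v := by
  rw [pnorm_le_iff hq] at hu hv
  have hy := sum_eq_one hq hy
  obtain ⟨a1, b1⟩ := abs_rpow_convex hq hα hβ hab u.1 v.1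
  obtain ⟨a2, b2⟩ := abs_rpow_convex hq hα hβ hab u.2 v.2
  rw [h1] at a1 b1
  rw [h2] at a2 b2
  have hu' := mul_le_mul_of_nonneg_left hu hα.le
  have hv' := mul_le_mul_of_nonneg_left hv hβ.le
  exact Prod.ext (b1 (by linarith)) (b2 (by linarith))

/-! ### The operator norm -/

lemma opNorm_bddAbove {p q : ℝ} (hp : 1 < p) (hq : 1 < q) (A : Matrix (Fin 2) (Fin 2) ℝ) :
    BddAbove {c : ℝ | ∃ z : ℝ × ℝ, pnorm p z = 1 ∧ c = pnorm q (app A z)} := by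
  refine ⟨((|A 0 0| + |A 0 1|) ^ q + (|A 1 0| + |A 1 1|) ^ q) ^ (1 / q), ?_⟩
  rintro c ⟨z, hz, rfl⟩
  have h1 := abs_fst_le hp z
  have h2 := abs_snd_le hp z
  rw [hz] at h1 h2
  have key : ∀ a b : ℝ, |a * z.1 + b * z.2| ≤ |a| + |b| := by
    intro a b
    refine (abs_add_le _ _).trans ?_
    rw [abs_mul, abs_mul]
    exact add_le_add (mul_le_of_le_one_right (abs_nonneg _) h1)
      (mul_le_of_le_one_right (abs_nonneg _) h2)
  have hq0 : 0 ≤ q := by linarith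
  unfold pnorm app
  refine Real.rpow_le_rpow (by positivity) (add_le_add ?_ ?_) (by positivity)
  · exact Real.rpow_le_rpow (abs_nonneg _) (key _ _) hq0
  · exact Real.rpow_le_rpow (abs_nonneg _) (key _ _) hq0

lemma le_opNorm {p q : ℝ} (hp : 1 < p) (hq : 1 < q) (A : Matrix (Fin 2) (Fin 2) ℝ) {z : ℝ × ℝ}
    (hz : pnorm p z = 1) : pnorm q (app A z) ≤ opNorm p q A :=
  le_csSup (opNorm_bddAbove hp hq A) ⟨z, hz, rfl⟩

/-- The unit vector `x` serves to make the set of values nonempty. -/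
lemma opNorm_le_iff {p q : ℝ} (hp : 1 < p) (hq : 1 < q) {x : ℝ × ℝ} (hx : pnorm p x = 1)
    (A : Matrix (Fin 2) (Fin 2) ℝ) :
    opNorm p q A ≤ 1 ↔ ∀ z, pnorm p z = 1 → pnorm q (app A z) ≤ 1 := by
  constructor
  · intro h z hz
    exact (le_opNorm hp hq A hz).trans h
  · intro h
    refine csSup_le ⟨_, x, hx, rfl⟩ ?_
    rintro c ⟨z, hz, rfl⟩
    exact h z hz

lemma app_le {p q : ℝ} (hp : 1 < p) (hq : 1 < q) {A : Matrix (Fin 2) (Fin 2) ℝ}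
    (hA : opNorm p q A ≤ 1) (z : ℝ × ℝ) : pnorm q (app A z) ≤ pnorm p z := by
  rcases (pnorm_nonneg p z).eq_or_lt with h | h
  · have h1 : z.1 = 0 := abs_nonpos_iff.1 (h ▸ abs_fst_le hp z)
    have h2 : z.2 = 0 := abs_nonpos_iff.1 (h ▸ abs_snd_le hp z)
    rw [← h]
    simp [app, h1, h2, pnorm, Real.zero_rpow (show q ≠ 0 by linarith),
      Real.zero_rpow (show q⁻¹ ≠ 0 by positivity)]
  · have h1 : pnorm p ((pnorm p z)⁻¹ * z.1, (pnorm p z)⁻¹ * z.2) = 1 := by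
      rw [pnorm_smul hp, abs_of_pos (inv_pos.2 h), inv_mul_cancel₀ h.ne']
    have h2 := (le_opNorm hp hq A h1).trans hA
    have h3 : app A ((pnorm p z)⁻¹ * z.1, (pnorm p z)⁻¹ * z.2) =
        ((pnorm p z)⁻¹ * (app A z).1, (pnorm p z)⁻¹ * (app A z).2) := by
      simp only [app]; ext <;> ring
    rw [h3, pnorm_smul hq, abs_of_pos (inv_pos.2 h)] at h2
    rwa [inv_mul_le_iff₀ h, mul_one] at h2

/-! ### Smoothness -/

/-- The `ℓ^r` norm is differentiable at a unit vector `z`, with gradient `z^{r-1}`. -/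
lemma hasDerivAt_pnorm {r : ℝ} (hr : 1 < r) {z : ℝ × ℝ} (hz : pnorm r z = 1) (h : ℝ × ℝ) :
    HasDerivAt (fun t : ℝ => pnorm r (z.1 + t * h.1, z.2 + t * h.2))
      ((spow z (r - 1)).1 * h.1 + (spow z (r - 1)).2 * h.2) 0 := by
  have key : ∀ a b : ℝ, HasDerivAt (fun t : ℝ => |a + t * b| ^ r)
      (r * (Real.sign a * |a| ^ (r - 1)) * b) 0 := by
    intro a b
    have h1 : HasDerivAt (fun t : ℝ => a + t * b) b 0 := by
      simpa using ((hasDerivAt_id (0:ℝ)).mul_const b).const_add a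
    have h2 := hasDerivAt_abs_rpow (a + 0 * b) hr
    have h3 := HasDerivAt.comp (0:ℝ) h2 h1
    refine h3.congr_deriv ?_
    rw [zero_mul, add_zero, mul_assoc r, deriv_coeff a r]
  have hN := (key z.1 h.1).add (key z.2 h.2)
  have e := sum_eq_one hr hz
  have h0 : ((fun t : ℝ => |z.1 + t * h.1| ^ r) + fun t : ℝ => |z.2 + t * h.2| ^ r) 0 = 1 := by
    simpa using e
  have := hN.rpow_const (p := 1 / r) (Or.inl (by rw [h0]; exact one_ne_zero))
  rw [h0, Real.one_rpow] at this
  refine this.congr_deriv ?_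
  have hr0 : r ≠ 0 := by linarith
  simp only [spow]
  field_simp

/-- A contraction taking the unit vector `x` to the unit vector `y` has an adjoint taking the
norming functional of `y` to that of `x`. -/
lemma dual_eq {p q : ℝ} (hp : 1 < p) (hq : 1 < q) {x y : ℝ × ℝ} (hx : pnorm p x = 1)
    (hy : pnorm q y = 1) {A : Matrix (Fin 2) (Fin 2) ℝ} (hA : opNorm p q A ≤ 1)
    (hAx : app A x = y) (h : ℝ × ℝ) :
    (spow y (q - 1)).1 * (app A h).1 + (spow y (q - 1)).2 * (app A h).2 =
      (spow x (p - 1)).1 * h.1 + (spow x (p - 1)).2 * h.2 := by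
  have d1 := hasDerivAt_pnorm hp hx h
  have d2 := hasDerivAt_pnorm hq hy (app A h)
  have d := d1.sub d2
  have hmin : IsLocalMin ((fun t : ℝ => pnorm p (x.1 + t * h.1, x.2 + t * h.2)) -
      fun t : ℝ => pnorm q (y.1 + t * (app A h).1, y.2 + t * (app A h).2)) 0 := by
    refine Filter.Eventually.of_forall fun t => ?_
    have e : app A (x.1 + t * h.1, x.2 + t * h.2) =
        (y.1 + t * (app A h).1, y.2 + t * (app A h).2) := by
      rw [← hAx]; simp only [app]; ext <;> ring
    have hle := app_le hp hq hA (x.1 + t * h.1, x.2 + t * h.2)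
    rw [e] at hle
    simp only [Pi.sub_apply, zero_mul, add_zero, Prod.mk.eta, hx, hy, sub_self]
    linarith
  have := hmin.hasDerivAt_eq_zero d
  linarith

/-! ### The line of operators `T_s` -/

/-- An operator sending `x` to `y` whose transpose sends `v` to `u` is determined by the number
`y^o · A u^o`. The formula comes from the decompositions of the identity
`1 = y vᵀ + v^o (y^o)ᵀ = x uᵀ + u^o (x^o)ᵀ`. -/
lemma matrix_eq {x y u v : ℝ × ℝ} (hu : u.1 * x.1 + u.2 * x.2 = 1)
    (hv : v.1 * y.1 + v.2 * y.2 = 1) {A : Matrix (Fin 2) (Fin 2) ℝ} (hAx : app A x = y)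
    (hd : ∀ h : ℝ × ℝ, v.1 * (app A h).1 + v.2 * (app A h).2 = u.1 * h.1 + u.2 * h.2) :
    A = tensor u y +
      ((rot y).1 * (app A (rot u)).1 + (rot y).2 * (app A (rot u)).2) •
        tensor (rot x) (rot v) := by
  have d1 := hd (1, 0)
  have d2 := hd (0, 1)
  have a1 := congrArg Prod.fst hAx
  have a2 := congrArg Prod.snd hAx
  simp only [app, mul_one, mul_zero, add_zero, zero_add] at d1 d2 a1 a2
  obtain ⟨x1, x2⟩ := x
  obtain ⟨y1, y2⟩ := y
  obtain ⟨u1, u2⟩ := u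
  obtain ⟨v1, v2⟩ := v
  ext i j
  fin_cases i <;> fin_cases j <;> simp [tensor, rot, app] at * <;> grind

/-- The set {s : ‖T_s‖ ≤ 1} is a bounded nonempty set whose endpoints give norm-one
  extreme contractions, where T_s = x^{p−1}⊗y + s·x^o⊗(y^o)^{q−1}. -/
theorem stmt_14 (p q : ℝ) (hp : 1 < p) (hq : 1 < q)
    (x y : ℝ × ℝ) (hx : pnorm p x = 1) (hy : pnorm q y = 1)
    (Ts : ℝ → Matrix (Fin 2) (Fin 2) ℝ)
    (hTs : ∀ s : ℝ, Ts s = tensor (spow x (p - 1)) y + s • tensor (rot x) (spow (rot y) (q - 1)))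
    (S : Set ℝ) (hS : S = {s : ℝ | opNorm p q (Ts s) ≤ 1}) :
    S.Nonempty ∧ BddAbove S ∧ BddBelow S ∧
    opNorm p q (Ts (sSup S)) = 1 ∧ opNorm p q (Ts (sInf S)) = 1 ∧
    Ts (sSup S) ∈ Set.extremePoints ℝ (unitBall p q) ∧
    Ts (sInf S) ∈ Set.extremePoints ℝ (unitBall p q) := by
  rw [spow_rot] at hTs
  have hu := spow_dot hp hx
  have hv := spow_dot hq hy
  have hHold := fun z => abs_spow_dot_le (z := z) hp hx
  have hdual := fun A hA h => dual_eq (A := A) hp hq hx hy hA h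
  generalize spow x (p - 1) = u at *
  generalize spow y (q - 1) = v at *
  have hmem : ∀ s, s ∈ S ↔ opNorm p q (Ts s) ≤ 1 := fun s => by rw [hS]; rfl
  have happ : ∀ s z, app (Ts s) z =
      ((u.1 * z.1 + u.2 * z.2) * y.1 + s * (-x.2 * z.1 + x.1 * z.2) * -v.2,
       (u.1 * z.1 + u.2 * z.2) * y.2 + s * (-x.2 * z.1 + x.1 * z.2) * v.1) := by
    intro s z
    rw [hTs]
    simp only [app, tensor, rot, Matrix.add_apply, Matrix.smul_apply, smul_eq_mul, Matrix.of_apply,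
      Matrix.cons_val', Matrix.cons_val_zero, Matrix.cons_val_one, Matrix.cons_val_fin_one]
    ext <;> ring
  have hTx : ∀ s, app (Ts s) x = y := by
    intro s
    rw [happ, hu]
    ext <;> ring
  have hcoef : ∀ s, (rot y).1 * (app (Ts s) (rot u)).1 + (rot y).2 * (app (Ts s) (rot u)).2 = s := by
    intro s
    rw [happ]
    simp only [rot]
    linear_combination (s * (v.1 * y.1 + v.2 * y.2)) * hu + s * hv
  have hne : S.Nonempty := by
    refine ⟨0, (hmem 0).2 ((opNorm_le_iff hp hq hx _).2 fun z hz => ?_)⟩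
    rw [happ]
    simp only [zero_mul, add_zero]
    rw [pnorm_smul hq, hy, mul_one]
    exact hHold z hz
  have hbd : ∀ s ∈ S, |s| ≤ pnorm p (rot u) + pnorm p (rot u) := by
    intro s hs
    have h := app_le hp hq ((hmem s).1 hs) (rot u)
    have h1 := (abs_fst_le hq _).trans h
    have h2 := (abs_snd_le hq _).trans h
    have y1 := abs_fst_le hq y
    have y2 := abs_snd_le hq y
    rw [hy] at y1 y2
    rw [← hcoef s]
    refine (abs_add_le _ _).trans ?_
    rw [abs_mul, abs_mul]
    simp only [rot, abs_neg] at *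
    exact add_le_add ((mul_le_of_le_one_left (abs_nonneg _) y2).trans h1)
      ((mul_le_of_le_one_left (abs_nonneg _) y1).trans h2)
  have hba : BddAbove S := ⟨_, fun s hs => (abs_le.1 (hbd s hs)).2⟩
  have hbb : BddBelow S := ⟨_, fun s hs => (abs_le.1 (hbd s hs)).1⟩
  have hcl : IsClosed S := by
    have : S = ⋂ z : ℝ × ℝ, ⋂ _ : pnorm p z = 1,
        {s : ℝ | |(app (Ts s) z).1| ^ q + |(app (Ts s) z).2| ^ q ≤ 1} := by
      ext s
      simp only [hmem, opNorm_le_iff hp hq hx, Set.mem_iInter, Set.mem_ofPred_eq, pnorm_le_iff hq]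
    rw [this]
    refine isClosed_iInter fun z => isClosed_iInter fun _ => isClosed_le ?_ continuous_const
    have hq0 : 0 ≤ q := by linarith
    simp only [happ]
    exact (Continuous.rpow_const (by fun_prop) fun _ => Or.inr hq0).add
      (Continuous.rpow_const (by fun_prop) fun _ => Or.inr hq0)
  have hsup := hcl.csSup_mem hne hba
  have hinf := hcl.csInf_mem hne hbb
  have hone : ∀ s ∈ S, opNorm p q (Ts s) = 1 := by
    intro s hs
    refine le_antisymm ((hmem s).1 hs) ?_
    have := le_opNorm hp hq (Ts s) hx
    rwa [hTx, hy] at this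
  -- Every contraction sending `x` to `y` lies on the line.
  have hline : ∀ A, opNorm p q A ≤ 1 → app A x = y → ∃ a ∈ S, A = Ts a := by
    intro A hA hAx
    have h := matrix_eq hu hv hAx (hdual A hA hAx)
    rw [← hTs] at h
    exact ⟨_, (hmem _).2 (h ▸ hA), h⟩
  have hext : ∀ s ∈ S, (∀ a ∈ S, ∀ b ∈ S, ∀ α β : ℝ, 0 < α → 0 < β → α + β = 1 →
      α * a + β * b = s → a = s) → Ts s ∈ Set.extremePoints ℝ (unitBall p q) := by
    intro s hs H
    rw [mem_extremePoints_iff_left]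
    refine ⟨(hmem s).1 hs, ?_⟩
    rintro A hA B hB ⟨α, β, hα, hβ, hab, hAB⟩
    have hsum : ∀ z, α * (app A z).1 + β * (app B z).1 = (app (Ts s) z).1 ∧
        α * (app A z).2 + β * (app B z).2 = (app (Ts s) z).2 := by
      intro z
      rw [← hAB]
      simp only [app, Matrix.add_apply, Matrix.smul_apply, smul_eq_mul]
      constructor <;> ring
    obtain ⟨s1, s2⟩ := hsum x
    rw [hTx] at s1 s2
    have hAx1 := (le_opNorm hp hq A hx).trans hA
    have hBx1 := (le_opNorm hp hq B hx).trans hB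
    have hABx := eq_of_convexComb hq hα hβ hab hAx1 hBx1 hy s1 s2
    have hAx : app A x = y := by
      rw [← hABx, ← add_mul, hab, one_mul] at s1 s2
      exact Prod.ext s1 s2
    obtain ⟨a, ha, rfl⟩ := hline A hA hAx
    obtain ⟨b, hb, rfl⟩ := hline B hB (hABx ▸ hAx)
    rw [H a ha b hb α β hα hβ hab]
    obtain ⟨r1, r2⟩ := hsum (rot u)
    have ea := hcoef a
    have eb := hcoef b
    rw [← hcoef s, ← r1, ← r2]
    linear_combination -α * ea - β * eb
  refine ⟨hne, hba, hbb, hone _ hsup, hone _ hinf, hext _ hsup ?_, hext _ hinf ?_⟩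
  · intro a ha b hb α β hα hβ hab h
    have h1 := le_csSup hba ha
    have h2 := le_csSup hba hb
    refine le_antisymm h1 ?_
    by_contra! h3
    have h4 := mul_lt_mul_of_pos_left h3 hα
    have h5 := mul_le_mul_of_nonneg_left h2 hβ.le
    have h6 : α * sSup S + β * sSup S = sSup S := by rw [← add_mul, hab, one_mul]
    linarith
  · intro a ha b hb α β hα hβ hab h
    have h1 := csInf_le hbb ha
    have h2 := csInf_le hbb hb
    refine le_antisymm ?_ h1
    by_contra! h3
    have h4 := mul_lt_mul_of_pos_left h3 hα
    have h5 := mul_le_mul_of_nonneg_left h2 hβ.le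
    have h6 : α * sInf S + β * sInf S = sInf S := by rw [← add_mul, hab, one_mul]
    linarith
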